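/- Let F₂ be the free group on two generators a, b, let σ be the automorphism of F₂ with σ(a) = a⁻¹ and σ(b) = b⁻¹, and let u, v ∈ F₂ satisfy σ(u) = u⁻¹ and σ(v) = v⁻¹. Then the automorphisms of F₂ given by x ↦ u⁻¹ σ(x) u and x ↦ v⁻¹ σ(x) v are conjugate in the group Aut(F₂). -/

import Mathlib

/-!
Conjugating `conj w * σ` by the inner automorphism `conj g` replaces `w` by `g * w * (σ g)⁻¹`,
which is `g * w * g` when `σ` inverts `g`. So if `σ` inverts the generators of a free group, both
end letters of a palindrome `w` may be stripped without leaving the conjugacy class of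
`conj w * σ`, until `w` is empty or a single letter `x ^ ε`. In the latter case the automorphism
fixing `x` and sending every other generator `y` to `x ^ ε * y` conjugates `σ` to
`conj (x ^ ε) * σ`.
-/

open FreeGroup (of mk lift IsReduced)
open MulAut (conj)

theorem isConj_conj_mul_twisted {G : Type*} [Group G] (σ : MulAut G) (g w : G) :
    IsConj (conj w * σ) (conj (g * w * (σ g)⁻¹) * σ) := by
  refine isConj_iff.mpr ⟨conj g, MulEquiv.ext fun x ↦ ?_⟩
  simp [mul_assoc]

section Transvection

variable {α : Type*} [DecidableEq α] {i k : α}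

/-- The endomorphism of a free group fixing the generator `i` and multiplying every other generator
on the left by the `n`-th power of `i`. Exponents are arbitrary integers so that the
inverse is of the same form. -/
def transvectionHom (i : α) (n : ℤ) : FreeGroup α →* FreeGroup α :=
  lift (Function.update (fun k ↦ of i ^ n * of k) i (of i))

theorem transvectionHom_of_self (i : α) (n : ℤ) : transvectionHom i n (of i) = of i := by
  simp [transvectionHom]

theorem transvectionHom_of_ne (hk : k ≠ i) (n : ℤ) :
    transvectionHom i n (of k) = of i ^ n * of k := by
  simp [transvectionHom, hk]

theorem transvectionHom_zero (i : α) : transvectionHom i 0 = MonoidHom.id _ := by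
  simp [transvectionHom, ← FreeGroup.lift_of_eq_id]

theorem transvectionHom_comp (i : α) (m n : ℤ) :
    (transvectionHom i m).comp (transvectionHom i n) = transvectionHom i (m + n) := by
  rw [add_comm]
  ext k
  obtain rfl | hk := eq_or_ne k i
  · simp only [MonoidHom.comp_apply, transvectionHom_of_self]
  · simp only [MonoidHom.comp_apply, transvectionHom_of_ne hk, transvectionHom_of_self, map_mul,
      map_zpow, zpow_add, mul_assoc]

/-- `transvectionHom i n` as an automorphism; it conjugates an automorphism `σ` inverting all
generators to `conj (of i ^ n) * σ`. -/
def transvection (i : α) (n : ℤ) : MulAut (FreeGroup α) :=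
  (transvectionHom i n).toMulEquiv (transvectionHom i (-n))
    (by rw [transvectionHom_comp, neg_add_cancel, transvectionHom_zero])
    (by rw [transvectionHom_comp, add_neg_cancel, transvectionHom_zero])

theorem transvection_of_self (i : α) (n : ℤ) : transvection i n (of i) = of i :=
  transvectionHom_of_self i n

theorem transvection_of_ne (hk : k ≠ i) (n : ℤ) :
    transvection i n (of k) = of i ^ n * of k :=
  transvectionHom_of_ne hk n

end Transvection

theorem isReduced_reverse {α : Type*} {L : List (α × Bool)} (hL : IsReduced L) :
    IsReduced L.reverse :=
  List.isChain_reverse.mpr (hL.imp fun _ _ h hab ↦ (h hab.symm).symm)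

theorem mk_singleton_eq_zpow {α : Type*} (x : α × Bool) :
    mk [x] = of x.1 ^ (if x.2 then 1 else -1 : ℤ) := by
  obtain ⟨i, _ | _⟩ := x <;> simp [of, FreeGroup.invRev]

section GeneratorInversion

variable {α : Type*} {σ : MulAut (FreeGroup α)}

theorem isConj_conj_of_zpow_mul (hσ : ∀ i, σ (of i) = (of i)⁻¹) (i : α) (n : ℤ) :
    IsConj σ (conj (of i ^ n) * σ) := by
  classical
  refine isConj_iff.mpr ⟨transvection i n, mul_inv_eq_of_eq_mul ?_⟩
  refine MulEquiv.toMonoidHom_injective (FreeGroup.ext_hom _ _ fun k ↦ ?_)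
  change transvection i n (σ (of k)) = of i ^ n * σ (transvection i n (of k)) * (of i ^ n)⁻¹
  obtain rfl | hk := eq_or_ne k i
  · simp only [hσ, map_inv, transvection_of_self]
    group
  · simp only [hσ, map_inv, map_mul, map_zpow, transvection_of_ne hk]
    group

theorem map_mk_singleton_of_map_of_eq_inv (hσ : ∀ i, σ (of i) = (of i)⁻¹) (x : α × Bool) :
    σ (mk [x]) = (mk [x])⁻¹ := by
  rw [mk_singleton_eq_zpow, map_zpow, hσ, inv_zpow]

theorem inv_map_mk_of_map_of_eq_inv (hσ : ∀ i, σ (of i) = (of i)⁻¹)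
    (L : List (α × Bool)) : (σ (mk L))⁻¹ = mk L.reverse := by
  induction L with
  | nil => simp only [← FreeGroup.one_eq_mk, map_one, inv_one, List.reverse_nil]
  | cons x L ih =>
    calc (σ (mk (x :: L)))⁻¹ = (σ (mk [x] * mk L))⁻¹ := by rw [FreeGroup.mul_mk]; rfl
      _ = (σ (mk L))⁻¹ * mk [x] := by
        rw [map_mul, mul_inv_rev, map_mk_singleton_of_map_of_eq_inv hσ, inv_inv]
      _ = mk (x :: L).reverse := by rw [ih, FreeGroup.mul_mk, List.reverse_cons]

theorem map_eq_inv_iff_palindrome_toWord [DecidableEq α] (hσ : ∀ i, σ (of i) = (of i)⁻¹)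
    {u : FreeGroup α} : σ u = u⁻¹ ↔ u.toWord.Palindrome := by
  have toWord_inv_map : (σ u)⁻¹.toWord = u.toWord.reverse := by
    rw [← FreeGroup.mk_toWord (x := u), inv_map_mk_of_map_of_eq_inv hσ, FreeGroup.toWord_mk,
      FreeGroup.mk_toWord, (isReduced_reverse FreeGroup.isReduced_toWord).reduce_eq]
  rw [List.Palindrome.iff_reverse_eq, ← toWord_inv_map, FreeGroup.toWord_inj, inv_eq_iff_eq_inv]

theorem isConj_conj_mk_mul_of_palindrome (hσ : ∀ i, σ (of i) = (of i)⁻¹)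
    {L : List (α × Bool)} (hL : L.Palindrome) : IsConj σ (conj (mk L) * σ) := by
  induction hL with
  | nil => rw [← FreeGroup.one_eq_mk, map_one, one_mul]
  | singleton x =>
    rw [mk_singleton_eq_zpow]
    exact isConj_conj_of_zpow_mul hσ _ _
  | @cons_concat x L _ ih =>
    have strip : mk (x :: (L ++ [x])) = mk [x] * mk L * (σ (mk [x]))⁻¹ := by
      rw [map_mk_singleton_of_map_of_eq_inv hσ, inv_inv, FreeGroup.mul_mk, FreeGroup.mul_mk]
      rfl
    rw [strip]
    exact ih.trans (isConj_conj_mul_twisted σ _ _)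

theorem isConj_conj_mul_of_map_eq_inv (hσ : ∀ i, σ (of i) = (of i)⁻¹)
    {u : FreeGroup α} (hu : σ u = u⁻¹) : IsConj σ (conj u * σ) := by
  classical
  simpa only [FreeGroup.mk_toWord] using
    isConj_conj_mk_mul_of_palindrome hσ ((map_eq_inv_iff_palindrome_toWord hσ).mp hu)

theorem sigma_gamma_palindrome_isConj_general (hσ : ∀ i, σ (of i) = (of i)⁻¹)
    {u v : FreeGroup α} (hu : σ u = u⁻¹) (hv : σ v = v⁻¹) :
    IsConj (conj u⁻¹ * σ) (conj v⁻¹ * σ) :=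
  have isConj_of_palindrome {w : FreeGroup α} (hw : σ w = w⁻¹) : IsConj σ (conj w⁻¹ * σ) :=
    isConj_conj_mul_of_map_eq_inv hσ (by rw [map_inv, hw])
  (isConj_of_palindrome hu).symm.trans (isConj_of_palindrome hv)

end GeneratorInversion

/-- Let `F₂` be free on `a, b`, let `σ` be the automorphism with `σ a = a⁻¹`, `σ b = b⁻¹`,
and let `u, v` be palindromes (`σ u = u⁻¹`, `σ v = v⁻¹`). Then the automorphisms
`x ↦ u⁻¹ σ(x) u` and `x ↦ v⁻¹ σ(x) v` are conjugate in `Aut(F₂)`. -/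
theorem sigma_gamma_palindrome_isConj (σ : MulAut (FreeGroup (Fin 2)))
    (h0 : σ (FreeGroup.of 0) = (FreeGroup.of 0)⁻¹)
    (h1 : σ (FreeGroup.of 1) = (FreeGroup.of 1)⁻¹)
    (u v : FreeGroup (Fin 2)) (hu : σ u = u⁻¹) (hv : σ v = v⁻¹) :
    IsConj (MulAut.conj u⁻¹ * σ) (MulAut.conj v⁻¹ * σ) := by
  exact sigma_gamma_palindrome_isConj_general (Fin.forall_fin_two.mpr ⟨h0, h1⟩) hu hv
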